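/- Let G be a normal subgroup of a group Π and let Q = Π/G. Suppose that Q has no nontrivial torsion element with only finitely many conjugates in Q (i.e. Φ⁺(Q) = {1}), and that every torsion element of G having only finitely many conjugates in G is an RS-element of Π (i.e. Φ⁺(G) is an RS-subgroup of Π). Then Π is a cut-group. -/

import Mathlib

/-- A group `G` is a *cut-group* if every central unit of the integral group ring `ℤ[G]`
is trivial, i.e. of the form `±g` for some `g ∈ G`. -/
def IsCutGroup (G : Type*) [Group G] : Prop :=
  ∀ u : (MonoidAlgebra ℤ G)ˣ,
    (u : MonoidAlgebra ℤ G) ∈ Subring.center (MonoidAlgebra ℤ G) →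
    ∃ g : G, (u : MonoidAlgebra ℤ G) = MonoidAlgebra.of ℤ G g ∨
      (u : MonoidAlgebra ℤ G) = -(MonoidAlgebra.of ℤ G g)

/-- A torsion element `x` of a group `G` is an *RS-element* of `G` if for every positive
integer `j` coprime to the order of `x`, `x ^ j` is conjugate in `G` to `x` or to `x⁻¹`. -/
def IsRSElement {G : Type*} [Group G] (x : G) : Prop :=
  ∀ j : ℕ, 0 < j → Nat.Coprime j (orderOf x) → (IsConj (x ^ j) x ∨ IsConj (x ^ j) x⁻¹)

/-- `Φ⁺(G)`: the set of torsion elements of `G` having only finitely many conjugates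
in `G` (the torsion part of the FC-subgroup of `G`). -/
def FCTorsion (G : Type*) [Group G] : Set G :=
  {g : G | {h : G | IsConj g h}.Finite ∧ IsOfFinOrder g}

/-!
The antipode of `ℤ[Γ]` is the involution `g ↦ g⁻¹`, and `u * u^* = 1` forces `u = ±g`, because the
coefficient of `u * u^*` at `1` is the sum of the squares of the coefficients of `u`. Given a
central unit `u`, the central unit `w = u * u^*` satisfies `w^* = w`. The normal subgroup `N`
generated by the supports of `w` and `w⁻¹` is finitely generated with centre of finite index, so
its torsion elements are the kernel of a homomorphism `φ` to a torsion-free abelian group.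
Since the centre of `ℤ[N]` is reduced, the homogeneous components of `w` for the grading by `φ`
are pairwise orthogonal; those of opposite degrees are exchanged by `^*`, so positivity leaves
only degree `1`. The same applies to `w⁻¹`, hence `N` is finite by Dietzmann's lemma.

The RS-condition now makes the coefficients of `w` constant on the generators of each cyclic
subgroup. Therefore traces of `w` are integers (by induction over subgroups from
`∑ x ∈ C, χ x = |C| * dim V^C`), and the scalar by which `w` acts on a simple `ℂ[N]`-module is
rational. It is also an algebraic integer, and so is its inverse, so it is `±1`. Thus `w ^ 2 = 1`,
that is `w * w^* = 1`, and `w = ±g`; positivity gives `w = 1`, and then `u` is trivial.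

A torsion element of `Γ` with finitely many conjugates maps into `Φ⁺(Γ ⧸ G) = {1}`, so it lies
in `G` and is an RS-element.
-/

theorem IsRSElement.isConj_or_isConj_inv_of_zpowers_eq {G : Type*} [Group G] {x y : G}
    (hrs : IsRSElement x) (hx : IsOfFinOrder x)
    (hxy : Subgroup.zpowers x = Subgroup.zpowers y) : IsConj y x ∨ IsConj y x⁻¹ := by
  obtain ⟨j, rfl : x ^ j = y⟩ := hx.mem_powers_iff_mem_zpowers.2 (hxy ▸ Subgroup.mem_zpowers y)
  have hcoprime : j.Coprime (orderOf x) :=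
    mem_zpowers_pow_iff.1 (hxy ▸ Subgroup.mem_zpowers x)
  have := hrs (j + orderOf x) (Nat.add_pos_right _ hx.orderOf_pos)
    (Nat.coprime_add_self_left.2 hcoprime)
  rwa [pow_add, pow_orderOf_eq_one, mul_one] at this

namespace FCTorsion

theorem mem_of_mem_finite_normal {G : Type*} [Group G] {N : Subgroup G} [N.Normal]
    [Finite N] {x : G} (hx : x ∈ N) : x ∈ FCTorsion G :=
  ⟨(N : Set G).toFinite.subset fun _ hxy ↦ by
      obtain ⟨g, rfl⟩ := isConj_iff.1 hxy
      exact Subgroup.Normal.conj_mem ‹_› x hx g,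
    Submonoid.isOfFinOrder_coe.2 (isOfFinOrder_of_finite (⟨x, hx⟩ : N))⟩

theorem map_mem {G H : Type*} [Group G] [Group H] {f : G →* H}
    (hf : Function.Surjective f) {x : G} (hx : x ∈ FCTorsion G) : f x ∈ FCTorsion H := by
  refine ⟨(hx.1.image f).subset fun y hy ↦ ?_, f.isOfFinOrder hx.2⟩
  obtain ⟨c, rfl⟩ := isConj_iff.1 hy
  obtain ⟨g, rfl⟩ := hf c
  exact ⟨g * x * g⁻¹, isConj_iff.2 ⟨g, rfl⟩, by simp only [map_mul, map_inv]⟩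

section FiniteConjugacyClasses

variable {G : Type*} [Group G]

theorem finiteIndex_centralizer {x : G} (hx : (conjugatesOf x).Finite) :
    (Subgroup.centralizer {x}).FiniteIndex := by
  have hindex : (Subgroup.centralizer {x}).index = (MulAction.orbit (ConjAct G) x).ncard := by
    rw [← MulAction.index_stabilizer, ConjAct.stabilizer_eq_centralizer]
    rfl
  have horbit : MulAction.orbit (ConjAct G) x = conjugatesOf x := by
    ext y
    rw [ConjAct.mem_orbit_conjAct, isConj_comm]; rfl
  refine ⟨?_⟩
  rw [hindex, horbit]
  exact (Set.ncard_pos hx).2 ⟨x, mem_conjugatesOf_self⟩ |>.ne'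

theorem finite_conjugatesOfSet {S : Set G} (hS : S.Finite)
    (hconj : ∀ x ∈ S, (conjugatesOf x).Finite) : (Group.conjugatesOfSet S).Finite :=
  hS.biUnion hconj

theorem fg_normalClosure {S : Set G} (hS : S.Finite)
    (hconj : ∀ x ∈ S, (conjugatesOf x).Finite) : Group.FG (Subgroup.normalClosure S) :=
  (Group.fg_iff_subgroup_fg _).2
    ((Subgroup.fg_iff _).2 ⟨_, rfl, finite_conjugatesOfSet hS hconj⟩)

theorem finiteIndex_center_normalClosure {S : Set G} (hS : S.Finite)
    (hconj : ∀ x ∈ S, (conjugatesOf x).Finite) :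
    (Subgroup.center (Subgroup.normalClosure S)).FiniteIndex := by
  have hgen : Subgroup.closure
      ((Subtype.val : Subgroup.normalClosure S → G) ⁻¹' Group.conjugatesOfSet S) = ⊤ :=
    Subgroup.closure_closure_coe_preimage
  have : Finite ((Subtype.val : Subgroup.normalClosure S → G) ⁻¹' Group.conjugatesOfSet S) :=
    ((finite_conjugatesOfSet hS hconj).preimage Subtype.val_injective.injOn).to_subtype
  rw [Subgroup.center_eq_infi' hgen]
  refine Subgroup.finiteIndex_iInf fun ⟨g, hg⟩ ↦ ?_
  obtain ⟨x, hxS, hxg⟩ := Group.mem_conjugatesOfSet_iff.1 hg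
  have := finiteIndex_centralizer (hxg.conjugatesOf_eq ▸ hconj x hxS)
  have hrestrict : (Subgroup.centralizer {(g : G)}).subgroupOf (Subgroup.normalClosure S) =
      Subgroup.centralizer {g} := by
    ext h
    simp only [Subgroup.mem_subgroupOf, Subgroup.mem_centralizer_singleton_iff, Subtype.ext_iff,
      Subgroup.coe_mul]
  rw [← hrestrict]
  infer_instance

end FiniteConjugacyClasses

section FreePart

open scoped IsMulCommutative
variable (H : Type*) [Group H] [(Subgroup.center H).FiniteIndex]

/-- The transfer `H → Z(H)`, `h ↦ h ^ [H : Z(H)]`, followed by reduction modulo torsion: a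
homomorphism to a torsion-free abelian group that kills exactly the torsion elements of `H`. -/
noncomputable def transferFreePart :
    H →* Subgroup.center H ⧸ CommGroup.torsion (Subgroup.center H) :=
  (QuotientGroup.mk' _).comp (MonoidHom.transferCenterPow H)

variable {H}

theorem transferFreePart_eq_one_iff {h : H} : transferFreePart H h = 1 ↔ IsOfFinOrder h := by
  have hindex : (Subgroup.center H).index ≠ 0 := Subgroup.FiniteIndex.index_ne_zero
  rw [transferFreePart, MonoidHom.comp_apply, QuotientGroup.mk'_apply, QuotientGroup.eq_one_iff]
  change IsOfFinOrder (MonoidHom.transferCenterPow H h) ↔ _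
  rw [← Submonoid.isOfFinOrder_coe, MonoidHom.transferCenterPow_apply, isOfFinOrder_pow,
    or_iff_left hindex]

theorem finite_of_forall_isOfFinOrder [Group.FG H] (htors : ∀ h : H, IsOfFinOrder h) : Finite H :=
  have : Finite (Subgroup.center H) := CommGroup.finite_of_fg_isMulTorsion _
    fun h ↦ Submonoid.isOfFinOrder_coe.1 (htors h)
  (Subgroup.finite_iff_finite_and_finiteIndex (Subgroup.center H)).2 ⟨this, inferInstance⟩

end FreePart

theorem finite_normalClosure {G : Type*} [Group G] {S : Set G} (hS : S.Finite)
    (hconj : ∀ x ∈ S, (conjugatesOf x).Finite) (htors : ∀ x ∈ S, IsOfFinOrder x) :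
    Finite (Subgroup.normalClosure S) := by
  have := fg_normalClosure hS hconj
  have := finiteIndex_center_normalClosure hS hconj
  set φ := transferFreePart (Subgroup.normalClosure S)
  refine finite_of_forall_isOfFinOrder fun ⟨h, hh⟩ ↦ transferFreePart_eq_one_iff.1 ?_
  induction hh using Subgroup.closure_induction with
  | mem x hx =>
    obtain ⟨y, hyS, hyx⟩ := Group.mem_conjugatesOfSet_iff.1 hx
    exact transferFreePart_eq_one_iff.2
      (Submonoid.isOfFinOrder_coe.1 (hyx.isOfFinOrder (htors y hyS)))
  | one => exact map_one φ
  | mul x y hx hy ihx ihy => exact (map_mul φ ⟨x, hx⟩ ⟨y, hy⟩).trans (by rw [ihx, ihy, one_mul])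
  | inv x hx ihx => exact (map_inv φ ⟨x, hx⟩).trans (by rw [ihx, inv_one])

end FCTorsion

open MonoidAlgebra HopfAlgebra
open scoped MonoidAlgebra

namespace GroupRing

section Center

variable {R G : Type*} [CommRing R] [Group G]

theorem mem_center_iff {a : R[G]} :
    a ∈ Subring.center R[G] ↔ ∀ x y, IsConj x y → a.coeff x = a.coeff y := by
  rw [Subring.mem_center_iff]
  constructor
  · intro ha x y hxy
    obtain ⟨g, rfl⟩ := isConj_iff.1 hxy
    simpa [coeff_single_mul_apply, coeff_mul_single_apply] using
      congr(($(ha (single g 1))).coeff (g * x))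
  · intro ha b
    induction b using induction_linear with
    | zero => simp only [zero_mul, mul_zero]
    | add b c hb hc => rw [add_mul, mul_add, hb, hc]
    | single g r =>
      ext x
      rw [coeff_single_mul_apply, coeff_mul_single_apply, mul_comm r,
        ha _ _ (isConj_iff.2 ⟨g, by group⟩ : IsConj (g⁻¹ * x) (x * g⁻¹))]

theorem finite_conjugatesOf {a : R[G]} (ha : a ∈ Subring.center R[G]) {g : G}
    (hg : a.coeff g ≠ 0) : (conjugatesOf g).Finite :=
  a.coeff.support.finite_toSet.subset fun h hgh ↦
    Finsupp.mem_support_iff.2 (mem_center_iff.1 ha g h hgh ▸ hg)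

end Center

section Antipode

variable {R G : Type*} [CommSemiring R] [Group G]

theorem coeff_antipode (a : R[G]) (g : G) : (antipode R a).coeff g = a.coeff g⁻¹ := by
  induction a using induction_linear with
  | zero => simp
  | add a b ha hb => simp [ha, hb]
  | single h r =>
    classical
    simp [antipode_single, Finsupp.single_apply, inv_eq_iff_eq_inv]

theorem antipode_antipode (a : R[G]) : antipode R (antipode R a) = a := by
  ext g
  simp only [coeff_antipode, inv_inv]

theorem antipode_mem_center {R : Type*} [CommRing R] {a : R[G]} (ha : a ∈ Subring.center R[G]) :
    antipode R a ∈ Subring.center R[G] :=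
  mem_center_iff.2 fun x y hxy ↦ by
    obtain ⟨g, rfl⟩ := isConj_iff.1 hxy
    simpa only [coeff_antipode] using
      mem_center_iff.1 ha _ _ (isConj_iff.2 ⟨g, by group⟩)

theorem coeff_one_mul_antipode (a b : R[G]) :
    (a * antipode R b).coeff 1 = a.coeff.sum fun g r ↦ r * b.coeff g := by
  induction a using induction_linear with
  | zero => simp
  | add a c ha hc =>
    rw [add_mul, coeff_add, Finsupp.add_apply, ha, hc, coeff_add,
      Finsupp.sum_add_index' (by simp) (by simp [add_mul])]
  | single g r => simp [coeff_single_mul_apply, coeff_antipode]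

theorem isUnit_antipode (u : R[G]ˣ) : IsUnit (antipode R (u : R[G])) :=
  ⟨⟨_, antipode R (↑u⁻¹ : R[G]), by rw [← antipode_mul_antidistrib, u.inv_mul, antipode_one],
    by rw [← antipode_mul_antidistrib, u.mul_inv, antipode_one]⟩, rfl⟩

end Antipode

section Positivity

variable {R G : Type*} [CommRing R] [LinearOrder R] [IsStrictOrderedRing R] [Group G]

theorem coeff_one_mul_antipode_self_pos {a : R[G]} (ha : a ≠ 0) :
    0 < (a * antipode R a).coeff 1 := by
  rw [coeff_one_mul_antipode]
  exact Finset.sum_pos (fun g hg ↦ mul_self_pos.2 (Finsupp.mem_support_iff.1 hg))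
    (Finsupp.support_nonempty_iff.2 fun h ↦ ha (coeff_inj.1 h))

theorem mul_antipode_self_eq_zero {a : R[G]} : a * antipode R a = 0 ↔ a = 0 := by
  refine ⟨fun h ↦ ?_, fun h ↦ by rw [h, zero_mul]⟩
  by_contra ha
  have hpos := coeff_one_mul_antipode_self_pos ha
  rw [h, coeff_zero, Finsupp.zero_apply] at hpos
  exact hpos.false

instance isReduced_center : IsReduced (Subring.center R[G]) := by
  refine (isReduced_iff_pow_one_lt 2 one_lt_two).2 fun ⟨z, hz⟩ hz2 ↦ Subtype.ext ?_
  have hzz : z * z = 0 := (sq z).symm.trans (congrArg Subtype.val hz2)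
  have hcomm : antipode R z * z = z * antipode R z := Subring.mem_center_iff.1 hz _
  refine mul_antipode_self_eq_zero.1 (mul_antipode_self_eq_zero.1 ?_)
  calc z * antipode R z * antipode R (z * antipode R z)
      = z * (antipode R z * z) * antipode R z := by
        rw [antipode_mul_antidistrib, antipode_antipode]
        simp only [mul_assoc]
    _ = 0 := by rw [hcomm, ← mul_assoc, hzz, zero_mul, zero_mul]

end Positivity

theorem exists_eq_or_eq_neg_of_mul_antipode_eq_one {G : Type*} [Group G] {a : ℤ[G]}
    (h : a * antipode ℤ a = 1) : ∃ g, a = of ℤ G g ∨ a = -of ℤ G g := by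
  have hsum : ∑ g ∈ a.coeff.support, a.coeff g * a.coeff g = 1 :=
    (coeff_one_mul_antipode a a).symm.trans (by rw [h, coeff_one_one])
  have hcard_le : a.coeff.support.card ≤ 1 := by
    have := Finset.card_nsmul_le_sum a.coeff.support (fun g ↦ a.coeff g * a.coeff g) 1
      fun g hg ↦ mul_self_pos.2 (Finsupp.mem_support_iff.1 hg)
    rw [hsum, nsmul_one] at this
    exact_mod_cast this
  have hcard_ne : a.coeff.support.card ≠ 0 := fun h0 ↦ by
    rw [Finset.card_eq_zero.1 h0, Finset.sum_empty] at hsum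
    exact zero_ne_one hsum
  obtain ⟨g, n, hn, ha⟩ := Finsupp.card_support_eq_one'.1
    (hcard_le.antisymm (Nat.one_le_iff_ne_zero.2 hcard_ne))
  obtain rfl | rfl : n = 1 ∨ n = -1 := by
    simpa [ha, Finsupp.support_single, hn, mul_self_eq_one_iff] using hsum
  · exact ⟨g, .inl (by ext; simp [ha])⟩
  · exact ⟨g, .inr (by ext; simp [ha])⟩

section Grading

theorem coeff_mul_coeff_eq_zero_of_mul_eq_one_of_isDomain {R M : Type*} [Ring R] [IsDomain R]
    [Monoid M] [TwoUniqueProds M] {a b : R[M]} (hab : a * b = 1) {i j : M} (hij : i ≠ j) :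
    a.coeff i * a.coeff j = 0 := by
  by_contra hne
  obtain ⟨hi, hj⟩ := mul_ne_zero_iff.1 hne
  have hb : b ≠ 0 := right_ne_zero_of_mul_eq_one hab
  have hcard : 1 < a.coeff.support.card * b.coeff.support.card := by
    refine Nat.one_lt_mul_iff.2 ⟨?_, ?_, Or.inl ?_⟩
    · exact Finset.card_pos.2 ⟨i, Finsupp.mem_support_iff.2 hi⟩
    · exact Finset.card_pos.2 (Finsupp.support_nonempty_iff.2 fun h ↦ hb (by ext; simp [h]))
    · exact Finset.one_lt_card.2
        ⟨i, Finsupp.mem_support_iff.2 hi, j, Finsupp.mem_support_iff.2 hj, hij⟩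
  obtain ⟨p, hp, q, hq, hpq, hup, huq⟩ := TwoUniqueProds.uniqueMul_of_one_lt_card hcard
  have hprod_eq_one : ∀ r ∈ a.coeff.support ×ˢ b.coeff.support,
      UniqueMul a.coeff.support b.coeff.support r.1 r.2 → r.1 * r.2 = 1 := by
    intro r hr hu
    by_contra hr1
    have hcoeff := coeff_mul_mul_of_uniqueMul hu
    rw [hab, one_def, coeff_single, Finsupp.single_eq_of_ne hr1] at hcoeff
    obtain ⟨h1, h2⟩ := Finset.mem_product.1 hr
    exact mul_ne_zero (Finsupp.mem_support_iff.1 h1) (Finsupp.mem_support_iff.1 h2) hcoeff.symm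
  obtain ⟨hq1, hq2⟩ := Finset.mem_product.1 hq
  obtain ⟨h1, h2⟩ := hup hq1 hq2 ((hprod_eq_one q hq huq).trans (hprod_eq_one p hp hup).symm)
  exact hpq (Prod.ext h1.symm h2.symm)

theorem coeff_mul_coeff_eq_zero_of_mul_eq_one {R M : Type*} [CommRing R] [IsReduced R]
    [Monoid M] [TwoUniqueProds M] {a b : R[M]} (hab : a * b = 1) {i j : M} (hij : i ≠ j) :
    a.coeff i * a.coeff j = 0 := by
  refine (nilpotent_iff_mem_prime.2 fun P hP ↦ ?_).eq_zero
  have := coeff_mul_coeff_eq_zero_of_mul_eq_one_of_isDomain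
    (a := mapRingHom M (Ideal.Quotient.mk P) a) (b := mapRingHom M (Ideal.Quotient.mk P) b)
    (by rw [← map_mul, hab, map_one]) hij
  rwa [coeff_mapRingHom, coeff_mapRingHom, ← map_mul, Ideal.Quotient.eq_zero_iff_mem] at this

section Coaction

variable {R G M : Type*} [CommSemiring R] [Monoid G] [Monoid M]

/-- The algebra homomorphism `R[G] → R[G][M]`, `g ↦ g ⊗ φ g`. The coefficient of `coaction φ a`
at `m` is the part of `a` supported on the fibre of `φ` over `m`. -/
noncomputable def coaction (φ : G →* M) : R[G] →ₐ[R] R[G][M] :=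
  lift R R[G][M] G
    { toFun g := single (φ g) (of R G g)
      map_one' := by simp only [map_one, one_def]
      map_mul' g h := by simp only [map_mul, single_mul_single] }

open Classical in
theorem coeff_coeff_coaction (φ : G →* M) (a : R[G]) (m : M) (g : G) :
    ((coaction φ a).coeff m).coeff g = if φ g = m then a.coeff g else 0 := by
  induction a using induction_linear with
  | zero => simp
  | add a b ha hb => simp only [map_add, coeff_add, Finsupp.add_apply, ha, hb]; split_ifs <;> simp
  | single h r =>
    rw [coaction, lift_single]
    by_cases hgh : g = h
    · subst hgh; by_cases hm : φ g = m <;> simp [hm]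
    · by_cases hm : φ h = m <;> simp [hm, Ne.symm hgh]

end Coaction

variable {R G M : Type*} [CommRing R] [Group G]

section CommMonoid

variable [CommMonoid M]

theorem coeff_coaction_mem_center (φ : G →* M) {a : R[G]} (ha : a ∈ Subring.center R[G])
    (m : M) : (coaction φ a).coeff m ∈ Subring.center R[G] :=
  mem_center_iff.2 fun x y hxy ↦ by
    rw [coeff_coeff_coaction, coeff_coeff_coaction, mem_center_iff.1 ha x y hxy,
      isConj_iff_eq.1 (φ.map_isConj hxy)]

theorem exists_mapRingHom_eq_coaction (φ : G →* M) {a : R[G]} (ha : a ∈ Subring.center R[G]) :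
    ∃ b : (Subring.center R[G])[M],
      mapRingHom M (Subring.center R[G]).subtype b = coaction φ a := by
  have hmem : ∀ m, (coaction φ a).coeff m ∈
      Set.range ((Subring.center R[G]).subtype : Subring.center R[G] →+ R[G]) :=
    fun m ↦ ⟨⟨_, coeff_coaction_mem_center φ ha m⟩, rfl⟩
  exact (range_map _).ge hmem

theorem coeff_coaction_mul_coeff_coaction_eq_zero [TwoUniqueProds M]
    [IsReduced (Subring.center R[G])] (φ : G →* M) {u : R[G]ˣ}
    (hu : (u : R[G]) ∈ Subring.center R[G]) {m n : M} (hmn : m ≠ n) :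
    (coaction φ (u : R[G])).coeff m * (coaction φ (u : R[G])).coeff n = 0 := by
  obtain ⟨a, ha⟩ := exists_mapRingHom_eq_coaction φ hu
  obtain ⟨b, hb⟩ := exists_mapRingHom_eq_coaction φ (Set.units_inv_mem_center hu)
  have hab : a * b = 1 := by
    refine map_injective ((Subring.center R[G]).subtype : Subring.center R[G] →+ R[G])
      Subtype.val_injective ?_
    change mapRingHom M _ (a * b) = mapRingHom M _ 1
    rw [map_mul, ha, hb, ← map_mul, u.mul_inv, map_one, map_one]
  have := coeff_mul_coeff_eq_zero_of_mul_eq_one hab hmn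
  rw [← ha, coeff_mapRingHom, coeff_mapRingHom, ← map_mul, this, map_zero]

end CommMonoid

theorem coeff_inv_coaction_antipode [Group M] (φ : G →* M) (a : R[G]) (m : M) :
    (coaction φ (antipode R a)).coeff m⁻¹ = antipode R ((coaction φ a).coeff m) := by
  classical
  ext g
  rw [coeff_antipode, coeff_coeff_coaction, coeff_coeff_coaction, coeff_antipode, map_inv φ]
  exact if_congr inv_eq_iff_eq_inv.symm rfl rfl

theorem map_eq_one_of_coeff_ne_zero [LinearOrder R] [IsStrictOrderedRing R] [CommGroup M]
    [IsMulTorsionFree M] [TwoUniqueProds M] (φ : G →* M) {u : R[G]ˣ}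
    (hu : (u : R[G]) ∈ Subring.center R[G]) (hsymm : antipode R (u : R[G]) = u) {g : G}
    (hg : (u : R[G]).coeff g ≠ 0) : φ g = 1 := by
  by_contra hφ
  have hopposite : (coaction φ (u : R[G])).coeff (φ g)⁻¹ =
      antipode R ((coaction φ (u : R[G])).coeff (φ g)) := by
    rw [← coeff_inv_coaction_antipode, hsymm]
  have hcomponent : (coaction φ (u : R[G])).coeff (φ g) = 0 :=
    mul_antipode_self_eq_zero.1 <| hopposite ▸
      coeff_coaction_mul_coeff_coaction_eq_zero φ hu (mt self_eq_inv.1 hφ)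
  apply hg
  classical
  simpa only [coeff_coeff_coaction, if_true, coeff_zero, Finsupp.zero_apply] using
    congrArg (fun z : R[G] ↦ z.coeff g) hcomponent

end Grading

section Restriction

theorem coeff_mapDomainRingHom {R G H : Type*} [Semiring R] [Monoid G] [Monoid H] {f : H →* G}
    (hf : Function.Injective f) (a : R[H]) (h : H) :
    (mapDomainRingHom R f a).coeff (f h) = a.coeff h :=
  Finsupp.mapDomain_apply hf _ _

theorem mem_center_of_mapDomainRingHom_mem_center {R G H : Type*} [CommRing R] [Group G]
    [Group H] {f : H →* G} (hf : Function.Injective f) {a : R[H]}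
    (ha : mapDomainRingHom R f a ∈ Subring.center R[G]) : a ∈ Subring.center R[H] :=
  mem_center_iff.2 fun x y hxy ↦ by
    rw [← coeff_mapDomainRingHom hf, ← coeff_mapDomainRingHom hf]
    exact mem_center_iff.1 ha _ _ (f.map_isConj hxy)

theorem antipode_mapDomainRingHom {R G H : Type*} [CommSemiring R] [Group G] [Group H]
    (f : H →* G) (a : R[H]) :
    antipode R (mapDomainRingHom R f a) = mapDomainRingHom R f (antipode R a) := by
  induction a using induction_linear with
  | zero => simp only [map_zero]
  | add a b ha hb => simp only [map_add, ha, hb]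
  | single h r => simp [antipode_single]

variable {R G : Type*} [Semiring R] [Group G]

/-- The union of the supports of a unit of `R[G]` and of its inverse: the unit restricts to a unit
of `R[H]` for every subgroup `H` containing this set. -/
def unitSupport (u : R[G]ˣ) : Set G :=
  {g | (u : R[G]).coeff g ≠ 0} ∪ {g | (↑u⁻¹ : R[G]).coeff g ≠ 0}

theorem finite_unitSupport (u : R[G]ˣ) : (unitSupport u).Finite :=
  (u : R[G]).coeff.hasFiniteSupport.union (↑u⁻¹ : R[G]).coeff.hasFiniteSupport

theorem exists_unit_mapDomainRingHom_subtype_eq (N : Subgroup G) {u : R[G]ˣ}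
    (hN : unitSupport u ⊆ N) :
    ∃ v : R[N]ˣ, mapDomainRingHom R N.subtype (v : R[N]) = u := by
  have hinj : Function.Injective (mapDomainRingHom R N.subtype) :=
    mapDomain_injective N.subtype_injective
  have hlift : ∀ a : R[G], (∀ g, a.coeff g ≠ 0 → g ∈ N) →
      ∃ b : R[N], mapDomainRingHom R N.subtype b = a := fun a ha ↦
    ⟨comapDomain _ N.subtype_injective a, mapDomain_comapDomain
      (fun g hg ↦ ⟨⟨g, ha g (Finsupp.mem_support_iff.1 hg)⟩, rfl⟩) N.subtype_injective⟩
  obtain ⟨a, ha⟩ := hlift u fun g hg ↦ hN (.inl hg)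
  obtain ⟨b, hb⟩ := hlift ↑u⁻¹ fun g hg ↦ hN (.inr hg)
  refine ⟨⟨a, b, hinj ?_, hinj ?_⟩, ha⟩
  · rw [map_mul, ha, hb, u.mul_inv, map_one]
  · rw [map_mul, ha, hb, u.inv_mul, map_one]

end Restriction

theorem finite_conjugatesOf_of_mem_unitSupport {R G : Type*} [CommRing R] [Group G]
    {u : R[G]ˣ} (hu : (u : R[G]) ∈ Subring.center R[G]) {g : G}
    (hg : g ∈ unitSupport u) : (conjugatesOf g).Finite :=
  hg.elim (finite_conjugatesOf hu) (finite_conjugatesOf (Set.units_inv_mem_center hu))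

theorem isOfFinOrder_of_coeff_ne_zero {R G : Type*} [CommRing R] [LinearOrder R]
    [IsStrictOrderedRing R] [Group G] {u : R[G]ˣ} (hu : (u : R[G]) ∈ Subring.center R[G])
    (hsymm : antipode R (u : R[G]) = u) {g : G} (hg : (u : R[G]).coeff g ≠ 0) :
    IsOfFinOrder g := by
  set N := Subgroup.normalClosure (unitSupport u)
  have hconj : ∀ x ∈ unitSupport u, (conjugatesOf x).Finite := fun _ ↦
    finite_conjugatesOf_of_mem_unitSupport hu
  have := FCTorsion.fg_normalClosure (finite_unitSupport u) hconj
  have := FCTorsion.finiteIndex_center_normalClosure (finite_unitSupport u) hconj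
  obtain ⟨v, hv⟩ := exists_unit_mapDomainRingHom_subtype_eq N Subgroup.subset_normalClosure
  have hvcenter : (v : R[N]) ∈ Subring.center R[N] :=
    mem_center_of_mapDomainRingHom_mem_center N.subtype_injective (hv ▸ hu)
  have hvsymm : antipode R (v : R[N]) = v :=
    mapDomain_injective N.subtype_injective <|
      (antipode_mapDomainRingHom N.subtype (v : R[N])).symm.trans (by rw [hv, hsymm]; exact hv.symm)
  have hgN : g ∈ N := Subgroup.subset_normalClosure (.inl hg)
  have hvg : (v : R[N]).coeff ⟨g, hgN⟩ ≠ 0 := by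
    rwa [← coeff_mapDomainRingHom N.subtype_injective, hv]
  exact Submonoid.isOfFinOrder_coe.2
    (FCTorsion.transferFreePart_eq_one_iff.1 (map_eq_one_of_coeff_ne_zero _ hvcenter hvsymm hvg))

theorem antipode_inv_of_antipode_eq_self {R G : Type*} [CommSemiring R] [Group G] {u : R[G]ˣ}
    (hu : antipode R (u : R[G]) = u) : antipode R (↑u⁻¹ : R[G]) = ↑u⁻¹ := by
  have hmul : antipode R (↑u⁻¹ : R[G]) * antipode R (u : R[G]) = 1 := by
    rw [← antipode_mul_antidistrib, u.mul_inv, antipode_one]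
  rw [hu] at hmul
  exact (Units.inv_eq_of_mul_eq_one_left hmul).symm

theorem isOfFinOrder_of_mem_unitSupport {R G : Type*} [CommRing R] [LinearOrder R]
    [IsStrictOrderedRing R] [Group G] {u : R[G]ˣ} (hu : (u : R[G]) ∈ Subring.center R[G])
    (hsymm : antipode R (u : R[G]) = u) {g : G} (hg : g ∈ unitSupport u) : IsOfFinOrder g :=
  hg.elim (isOfFinOrder_of_coeff_ne_zero hu hsymm)
    (isOfFinOrder_of_coeff_ne_zero (Set.units_inv_mem_center hu)
      (antipode_inv_of_antipode_eq_self hsymm))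

section CyclicSubgroups

open Classical in
theorem sum_filter_zpowers_eq_mem {T A : Type*} [Group T] [Fintype T] [AddCommGroup A]
    {B : AddSubgroup A} {f : T → A} (hf : ∀ C : Subgroup T, ∑ x with x ∈ C, f x ∈ B)
    (D : Subgroup T) : ∑ x with Subgroup.zpowers x = D, f x ∈ B := by
  induction D using WellFoundedLT.induction with
  | ind D ih =>
    have hpartition : ∑ C with C ≤ D, ∑ x with Subgroup.zpowers x = C, f x =
        ∑ x with x ∈ D, f x := by
      rw [← Finset.sum_fiberwise_of_maps_to (t := Finset.univ.filter (· ≤ D))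
        (g := fun x : T ↦ Subgroup.zpowers x) (by simp)]
      refine Finset.sum_congr rfl fun C hC ↦ Finset.sum_congr ?_ fun _ _ ↦ rfl
      ext x
      simp only [Finset.mem_filter, Finset.mem_univ, true_and, iff_and_self] at hC ⊢
      rintro rfl
      exact hC (Subgroup.mem_zpowers x)
    rw [← Finset.add_sum_erase _ _ (show D ∈ Finset.univ.filter (· ≤ D) by simp)] at hpartition
    rw [eq_sub_of_add_eq hpartition]
    refine B.sub_mem (hf D) (B.sum_mem fun C hC ↦ ih C ?_)
    simp only [Finset.mem_erase, Finset.mem_filter, Finset.mem_univ, true_and] at hC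
    exact hC.2.lt_of_ne hC.1

open Classical in
theorem sum_zsmul_mem {T A : Type*} [Group T] [Fintype T] [AddCommGroup A]
    {B : AddSubgroup A} {f : T → A} (hf : ∀ C : Subgroup T, ∑ x with x ∈ C, f x ∈ B)
    {a : T → ℤ} (ha : ∀ x y, Subgroup.zpowers x = Subgroup.zpowers y → a x = a y) :
    ∑ x, a x • f x ∈ B := by
  rw [← Finset.sum_fiberwise _ (fun x : T ↦ Subgroup.zpowers x)]
  refine B.sum_mem fun D _ ↦ ?_
  by_cases hD : ∃ y, Subgroup.zpowers y = D
  · obtain ⟨y, rfl⟩ := hD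
    rw [Finset.sum_congr rfl fun x hx ↦ by rw [ha x y (Finset.mem_filter.1 hx).2],
      ← Finset.smul_sum]
    exact B.zsmul_mem (sum_filter_zpowers_eq_mem hf _) _
  · rw [Finset.sum_eq_zero fun x hx ↦ absurd ⟨x, (Finset.mem_filter.1 hx).2⟩ hD]
    exact B.zero_mem

end CyclicSubgroups

section Characters

variable {K T V : Type*} [Field K] [Group T] [AddCommGroup V] [Module K V]

theorem trace_asAlgebraHom_mapRingHom [Fintype T] (ρ : Representation K T V) (a : ℤ[T]) :
    LinearMap.trace K V (ρ.asAlgebraHom (mapRingHom T (Int.castRingHom K) a)) =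
      ∑ x, a.coeff x • ρ.character x := by
  rw [Representation.asAlgebraHom_def, lift_apply,
    Finsupp.sum_fintype _ (fun x r ↦ r • ρ x) fun x ↦ zero_smul K (ρ x), map_sum]
  simp only [map_zsmul, coeff_mapRingHom, Int.coe_castRingHom, Int.cast_smul_eq_zsmul,
    Representation.character]

variable [CharZero K] [FiniteDimensional K V]

theorem sum_character [Fintype T] (ρ : Representation K T V) :
    ∑ x, ρ.character x = Nat.card T * Module.finrank K ρ.invariants := by
  have hcard : (Nat.card T : K) ≠ 0 := Nat.cast_ne_zero.2 Nat.card_pos.ne'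
  have := invertibleOfNonzero hcard
  rw [← ρ.card_inv_mul_sum_char_eq_finrank, mul_inv_cancel_left₀ hcard]

theorem exists_int_trace_asAlgebraHom_eq [Finite T] (ρ : Representation K T V) {a : ℤ[T]}
    (ha : ∀ x y, Subgroup.zpowers x = Subgroup.zpowers y → a.coeff x = a.coeff y) :
    ∃ n : ℤ, LinearMap.trace K V (ρ.asAlgebraHom (mapRingHom T (Int.castRingHom K) a)) = n := by
  classical
  have := Fintype.ofFinite T
  have hsubgroup : ∀ C : Subgroup T,
      ∑ x with x ∈ C, ρ.character x ∈ (Int.castRingHom K).toAddMonoidHom.range := fun C ↦ by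
    let σ : Representation K C V := ρ.comp C.subtype
    rw [Finset.sum_subtype (p := (· ∈ C)) _ (by simp) ρ.character]
    refine ⟨Nat.card C * Module.finrank K σ.invariants, Eq.trans ?_ (sum_character σ).symm⟩
    simp only [RingHom.toAddMonoidHom_eq_coe, AddMonoidHom.coe_coe, map_mul, map_natCast]
  obtain ⟨n, hn⟩ := sum_zsmul_mem hsubgroup ha
  exact ⟨n, (trace_asAlgebraHom_mapRingHom ρ a).trans hn.symm⟩

end Characters

section SimpleModules

theorem exists_forall_smul_eq_of_mem_center {K A V : Type*} [Field K] [IsAlgClosed K] [Ring A]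
    [Algebra K A] [AddCommGroup V] [Module K V] [Module A V] [IsScalarTower K A V]
    [IsSimpleModule A V] [FiniteDimensional K V] {c : A} (hc : c ∈ Subring.center A) :
    ∃ μ : K, ∀ v : V, c • v = μ • v := by
  let f : Module.End A V :=
    { toFun := (c • ·)
      map_add' := smul_add c
      map_smul' := fun a v ↦ by
        rw [RingHom.id_apply, ← mul_smul, ← mul_smul, Subring.mem_center_iff.1 hc a] }
  obtain ⟨μ, hμ⟩ := (IsSimpleModule.algebraMap_end_bijective_of_isAlgClosed (A := A) K).2 f
  exact ⟨μ, fun v ↦ (LinearMap.congr_fun hμ v).symm⟩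

theorem eq_zero_of_forall_isSimpleModule_mul_eq_zero {A : Type*} [Ring A] [IsSemisimpleRing A]
    {a : A} (ha : ∀ I : Submodule A A, IsSimpleModule A I → ∀ x ∈ I, a * x = 0) : a = 0 := by
  have hmem : a ∈ (sSup {I : Submodule A A | IsSimpleModule A I}).annihilator := by
    rw [sSup_eq_iSup', Submodule.annihilator_iSup, Submodule.mem_iInf]
    exact fun I ↦ Submodule.mem_annihilator.2 (ha I I.2)
  rw [IsSemisimpleModule.sSup_simples_eq_top, Submodule.mem_annihilator] at hmem
  simpa only [smul_eq_mul, mul_one] using hmem 1 trivial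

theorem mapRingHom_mem_center {R S G : Type*} [CommRing R] [CommRing S] [Group G] (f : R →+* S)
    {a : R[G]} (ha : a ∈ Subring.center R[G]) : mapRingHom G f a ∈ Subring.center S[G] :=
  mem_center_iff.2 fun x y hxy ↦ by
    rw [coeff_mapRingHom, coeff_mapRingHom, mem_center_iff.1 ha x y hxy]

theorem exists_int_eq_of_isIntegral {K : Type*} [Field K] [CharZero K] {q : ℚ}
    (h : IsIntegral ℤ (q : K)) : ∃ n : ℤ, (n : K) = q := by
  rw [← eq_ratCast (algebraMap ℚ K), isIntegral_algebraMap_iff (algebraMap ℚ K).injective,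
    IsIntegrallyClosed.isIntegral_iff] at h
  obtain ⟨n, rfl⟩ := h
  exact ⟨n, by simp⟩

variable {K T V : Type*} [Field K] [Group T] [Finite T] [AddCommGroup V] [Nontrivial V]
  [Module K V] [Module K[T] V] [IsScalarTower K K[T] V]

theorem isIntegral_of_smul_eq_smul {a : ℤ[T]} {μ : K}
    (h : ∀ v : V, mapRingHom T (Int.castRingHom K) a • v = μ • v) : IsIntegral ℤ μ := by
  let f : ℤ[T] →+* Module.End K V :=
    (Algebra.lsmul K K V : K[T] →ₐ[K] Module.End K V).toRingHom.comp
      (mapRingHom T (Int.castRingHom K))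
  have hf : f a = algebraMap K (Module.End K V) μ := LinearMap.ext h
  have hint : IsIntegral ℤ (f a) := (Algebra.IsIntegral.isIntegral a).map f.toIntAlgHom
  exact (isIntegral_algebraMap_iff (FaithfulSMul.algebraMap_injective K _)).1 (hf ▸ hint)

variable [CharZero K] [FiniteDimensional K V]

theorem exists_rat_eq_of_smul_eq_smul {a : ℤ[T]}
    (ha : ∀ x y, Subgroup.zpowers x = Subgroup.zpowers y → a.coeff x = a.coeff y) {μ : K}
    (h : ∀ v : V, mapRingHom T (Int.castRingHom K) a • v = μ • v) : ∃ q : ℚ, (q : K) = μ := by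
  let ρ : Representation K T V := (lift K _ T).symm (Algebra.lsmul K K V)
  have hscalar : ρ.asAlgebraHom (mapRingHom T (Int.castRingHom K) a) =
      μ • (1 : Module.End K V) := by
    rw [Representation.asAlgebraHom_def, Equiv.apply_symm_apply]
    exact LinearMap.ext h
  obtain ⟨n, hn⟩ := exists_int_trace_asAlgebraHom_eq ρ ha
  rw [hscalar, map_smul, LinearMap.trace_one, smul_eq_mul] at hn
  have hdim : (Module.finrank K V : K) ≠ 0 := Nat.cast_ne_zero.2 Module.finrank_pos.ne'
  exact ⟨n / Module.finrank K V, by push_cast; rw [← hn, mul_div_cancel_right₀ _ hdim]⟩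

theorem mul_self_eq_one_of_smul_eq_smul {u : ℤ[T]ˣ}
    (hu : ∀ x y, Subgroup.zpowers x = Subgroup.zpowers y →
      (u : ℤ[T]).coeff x = (u : ℤ[T]).coeff y)
    {μ : K} (h : ∀ v : V, mapRingHom T (Int.castRingHom K) (u : ℤ[T]) • v = μ • v) :
    μ * μ = 1 := by
  set ι := mapRingHom T (Int.castRingHom K)
  obtain ⟨q, rfl⟩ := exists_rat_eq_of_smul_eq_smul hu h
  have hcancel : ∀ v : V, ι (↑u⁻¹ : ℤ[T]) • (q : K) • v = v := fun v ↦ by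
    rw [← h, ← mul_smul, ← map_mul, u.inv_mul, map_one, one_smul]
  have hq : (q : K) ≠ 0 := by
    rintro hq
    obtain ⟨v, hv⟩ := exists_ne (0 : V)
    exact hv (by rw [← hcancel v, hq, zero_smul, smul_zero])
  have hinv : ∀ v : V, ι (↑u⁻¹ : ℤ[T]) • v = ((q⁻¹ : ℚ) : K) • v := fun v ↦ by
    rw [← hcancel (((q⁻¹ : ℚ) : K) • v), smul_smul (q : K), Rat.cast_inv, mul_inv_cancel₀ hq,
      one_smul]
  obtain ⟨n, hn⟩ := exists_int_eq_of_isIntegral (isIntegral_of_smul_eq_smul h)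
  obtain ⟨m, hm⟩ := exists_int_eq_of_isIntegral (isIntegral_of_smul_eq_smul hinv)
  have hnm : n * m = 1 := by
    have : (n : K) * m = 1 := by rw [hn, hm, Rat.cast_inv, mul_inv_cancel₀ hq]
    exact_mod_cast this
  rw [← hn]
  exact_mod_cast Int.isUnit_mul_self (IsUnit.of_mul_eq_one m hnm)

end SimpleModules

theorem mul_self_eq_one_of_forall_zpowers_eq {T : Type*} [Group T] [Finite T] {u : ℤ[T]ˣ}
    (hu : (u : ℤ[T]) ∈ Subring.center ℤ[T])
    (hgen : ∀ x y, Subgroup.zpowers x = Subgroup.zpowers y →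
      (u : ℤ[T]).coeff x = (u : ℤ[T]).coeff y) : u * u = 1 := by
  let ι := mapRingHom T (Int.castRingHom ℂ)
  have hzero : ι u * ι u - 1 = 0 := by
    refine eq_zero_of_forall_isSimpleModule_mul_eq_zero fun I hI x hx ↦ ?_
    have := IsSimpleModule.nontrivial ℂ[T] I
    have : FiniteDimensional ℂ I :=
      FiniteDimensional.finiteDimensional_submodule (I.restrictScalars ℂ)
    obtain ⟨μ, hμ⟩ := exists_forall_smul_eq_of_mem_center (K := ℂ) (V := I)
      (mapRingHom_mem_center (Int.castRingHom ℂ) hu)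
    have hμx : ι u * x = μ • x := congrArg Subtype.val (hμ ⟨x, hx⟩)
    rw [sub_mul, mul_assoc, hμx, mul_smul_comm, hμx, smul_smul,
      mul_self_eq_one_of_smul_eq_smul hgen hμ, one_smul, one_mul, sub_self]
  have hinj : Function.Injective ι := map_injective (Int.castAddHom ℂ) Int.cast_injective
  refine Units.ext (hinj ?_)
  rw [Units.val_mul, map_mul, Units.val_one, map_one, sub_eq_zero.1 hzero]

theorem mul_self_eq_one_of_antipode_eq_self {G : Type*} [Group G]
    (hrs : ∀ x ∈ FCTorsion G, IsRSElement x) {u : ℤ[G]ˣ} (hu : (u : ℤ[G]) ∈ Subring.center ℤ[G])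
    (hsymm : antipode ℤ (u : ℤ[G]) = u) : u * u = 1 := by
  set N := Subgroup.normalClosure (unitSupport u)
  have : Finite N := FCTorsion.finite_normalClosure (finite_unitSupport u)
    (fun _ ↦ finite_conjugatesOf_of_mem_unitSupport hu)
    fun _ ↦ isOfFinOrder_of_mem_unitSupport hu hsymm
  obtain ⟨v, hv⟩ := exists_unit_mapDomainRingHom_subtype_eq N Subgroup.subset_normalClosure
  have hcenter : (v : ℤ[N]) ∈ Subring.center ℤ[N] :=
    mem_center_of_mapDomainRingHom_mem_center N.subtype_injective (hv ▸ hu)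
  have hgen : ∀ x y : N, Subgroup.zpowers x = Subgroup.zpowers y →
      (v : ℤ[N]).coeff x = (v : ℤ[N]).coeff y := by
    intro x y hxy
    rw [← coeff_mapDomainRingHom N.subtype_injective, ← coeff_mapDomainRingHom N.subtype_injective,
      hv]
    have hx : (x : G) ∈ FCTorsion G := FCTorsion.mem_of_mem_finite_normal x.2
    have hzpowers : Subgroup.zpowers (x : G) = Subgroup.zpowers (y : G) := by
      simpa only [MonoidHom.map_zpowers, Subgroup.coe_subtype] using
        congrArg (Subgroup.map N.subtype) hxy
    obtain h | h := (hrs x hx).isConj_or_isConj_inv_of_zpowers_eq hx.2 hzpowers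
    · exact (mem_center_iff.1 hu _ _ h).symm
    · rw [Subgroup.coe_subtype, mem_center_iff.1 hu _ _ h, ← coeff_antipode, hsymm]
  have hvv : (v : ℤ[N]) * v = 1 :=
    congrArg Units.val (mul_self_eq_one_of_forall_zpowers_eq hcenter hgen)
  refine Units.ext ?_
  rw [Units.val_mul, ← hv, ← map_mul, hvv, map_one, Units.val_one]

theorem mul_antipode_eq_one_of_mul_self_eq_one {G : Type*} [Group G] {a : ℤ[G]}
    (h : a * antipode ℤ a * (a * antipode ℤ a) = 1) : a * antipode ℤ a = 1 := by
  have hsymm : antipode ℤ (a * antipode ℤ a) = a * antipode ℤ a := by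
    rw [antipode_mul_antidistrib, antipode_antipode]
  have hpos : 0 < (a * antipode ℤ a).coeff 1 := coeff_one_mul_antipode_self_pos fun h0 ↦ by
    rw [h0, zero_mul, zero_mul] at h
    exact zero_ne_one h
  obtain ⟨g, hg | hg⟩ := exists_eq_or_eq_neg_of_mul_antipode_eq_one (by rw [hsymm, h])
  · obtain rfl : g = 1 := by
      by_contra hg1
      simp [hg, hg1] at hpos
    rw [hg, map_one]
  · by_cases hg1 : g = 1 <;> simp [hg, hg1] at hpos

theorem isCutGroup_of_forall_isRSElement {G : Type*} [Group G]
    (hrs : ∀ x ∈ FCTorsion G, IsRSElement x) : IsCutGroup G := by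
  intro u hu
  obtain ⟨v, hv⟩ := isUnit_antipode u
  have hsquare : u * v * (u * v) = 1 := by
    refine mul_self_eq_one_of_antipode_eq_self hrs ?_ ?_ <;> rw [Units.val_mul, hv]
    · exact Subring.mul_mem _ hu (antipode_mem_center hu)
    · rw [antipode_mul_antidistrib, antipode_antipode]
  refine exists_eq_or_eq_neg_of_mul_antipode_eq_one (mul_antipode_eq_one_of_mul_self_eq_one ?_)
  simpa only [Units.val_mul, Units.val_one, hv] using congrArg Units.val hsquare

end GroupRing

/-- Let `G` be a normal subgroup of `Γ` with `Φ⁺(Γ ⧸ G) = {1}`.  If every torsion element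
of `G` having only finitely many conjugates in `G` is an RS-element of `Γ` (i.e. `Φ⁺(G)` is
an RS-subgroup of `Γ`), then `Γ` is a cut-group. -/
theorem isCutGroup_of_fcTorsion_rs {Γ : Type*} [Group Γ] (G : Subgroup Γ) [G.Normal]
    (hQ : ∀ q : Γ ⧸ G, q ∈ FCTorsion (Γ ⧸ G) → q = 1)
    (hrs : ∀ g : Γ, g ∈ G → {h : Γ | ∃ x ∈ G, x * g * x⁻¹ = h}.Finite → IsOfFinOrder g →
      IsRSElement g) :
    IsCutGroup Γ := by
  refine GroupRing.isCutGroup_of_forall_isRSElement fun g hg ↦ ?_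
  have hgG : g ∈ G := (QuotientGroup.eq_one_iff g).1 <|
    hQ _ (FCTorsion.map_mem (QuotientGroup.mk'_surjective G) hg)
  have hfinite : {h : Γ | ∃ x ∈ G, x * g * x⁻¹ = h}.Finite :=
    hg.1.subset fun _ ⟨x, _, hx⟩ ↦ isConj_iff.2 ⟨x, hx⟩
  exact hrs g hgG hfinite hg.2
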